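/- For every positive integer k and every k-glue function g, there exists a set of k dipole words, each of length 9k+42, that attractively encodes g. -/

import Mathlib

/-- The alphabet Σ = {0, 1, ⋄} of dipole letters. -/
inductive Dip : Type
  | zero : Dip
  | one : Dip
  | blank : Dip
  deriving DecidableEq

open Dip

/-- The force between a pair of letters: 1 if {x,y} = {0,1}, -1 if x = y ∈ {0,1}, 0 otherwise. -/
def lf : Dip → Dip → ℤ
  | zero, one => 1
  | one, zero => 1
  | zero, zero => -1
  | one, one => -1
  | _, _ => 0

/-- The force between a pair of equal-length words: the sum of letterwise forces. -/
def force (X Y : List Dip) : ℤ := (List.zipWith lf X Y).sum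

/-- The length-`i` suffix of a word. -/
def sufx (X : List Dip) (i : ℕ) : List Dip := X.drop (X.length - i)

/-- A pair of equal-length words `X`, `Y` is aligned provided `f(X,Y) ≤ 0` and all proper
prefix/suffix overlaps with `Y` and its reverse have non-positive force. -/
def aligned (X Y : List Dip) : Prop :=
  force X Y ≤ 0 ∧
    ∀ A ∈ [Y, Y.reverse], ∀ i, 1 ≤ i → i ≤ X.length - 1 →
      force (X.take i) (sufx A i) ≤ 0 ∧ force (sufx X i) (A.take i) ≤ 0

/-- The words `W 1, …, W k` attractively encode the `k`-glue function `g`: every pair is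
aligned and `f(Wᵢ, Rev(Wⱼ)) > 0` iff `g i j > 0`. -/
def attEncodes (k : ℕ) (W : ℕ → List Dip) (g : ℕ → ℕ → ℤ) : Prop :=
  (∀ i ∈ Finset.Icc 1 k, ∀ j ∈ Finset.Icc 1 k, aligned (W i) (W j)) ∧
    ∀ i ∈ Finset.Icc 1 k, ∀ j ∈ Finset.Icc 1 k,
      (0 < force (W i) ((W j).reverse) ↔ 0 < g i j)

/-!
Give `0`, `1` and `⋄` the charges `1`, `-1` and `0`, and encode a word as the polynomial whose
coefficients are its charges. The overlap forces of `V` with `W` are then the negated coefficients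
of the product of the polynomial of `V` with that of `Rev W`, so alignment means that certain
products have nonnegative coefficients.

Each word carries a single `1`, at position `5` (counting from `0`), flanked by `0`s, and a `0` at
position `n - 6` that faces the `1` of a reversed word; everything else is made of dominoes `00`,
including those starting at `2`, `7`, `9` and `n - 2`. The only negative coefficients come from the
single `1`, and the four common dominoes outweigh them in every overlap except that of a word laid
exactly on a reversed one, where the two facing pairs `0`, `1` contribute a force of `2`. In that
position each domino of one word facing a domino of the other contributes `-2`, so the words attract
iff no dominoes face each other. Word `i` therefore gets a domino at `9 + 2 i`, and one facing
position `9 + 2 l` for each `l` with `g i l ≤ 0`.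
-/

open Polynomial

/-- The charge of a letter, for which the force between two letters is minus the product of their
charges. -/
def Dip.charge : Dip → ℤ
  | zero => 1
  | one => -1
  | blank => 0

lemma lf_eq_neg_charge_mul_charge (x y : Dip) : lf x y = -(x.charge * y.charge) := by
  cases x <;> cases y <;> rfl

lemma force_comm (V W : List Dip) : force V W = force W V := by
  simp only [force, List.zipWith_comm (as := V), funext₂ lf_eq_neg_charge_mul_charge, mul_comm]

lemma force_eq_neg_sum_charge : ∀ {V W : List Dip}, V.length = W.length →
    force V W =
      -∑ p ∈ Finset.range V.length, (V.getD p blank).charge * (W.getD p blank).charge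
  | [], _, _ => by simp [force]
  | x :: V, y :: W, h => by
    have ih := force_eq_neg_sum_charge (V := V) (W := W) (by simpa using h)
    simp only [force] at ih
    simp only [force, List.zipWith_cons_cons, List.sum_cons, List.length_cons, ih,
      Finset.sum_range_succ', List.getD_cons_succ, List.getD_cons_zero,
      lf_eq_neg_charge_mul_charge]
    ring

/-- The generating polynomial of the charges of a word. -/
noncomputable def chargePoly (W : List Dip) : ℤ[X] :=
  ∑ p ∈ Finset.range W.length, C (W.getD p blank).charge * X ^ p

lemma coeff_chargePoly (W : List Dip) (p : ℕ) :
    (chargePoly W).coeff p = (W.getD p blank).charge := by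
  simp only [chargePoly, finsetSum_coeff, coeff_C_mul, coeff_X_pow, mul_ite, mul_one, mul_zero,
    Finset.sum_ite_eq, Finset.mem_range]
  split_ifs with hp
  · rfl
  · rw [List.getD_eq_default _ _ (not_lt.1 hp), charge]

lemma natDegree_chargePoly_le (W : List Dip) : (chargePoly W).natDegree ≤ W.length - 1 :=
  natDegree_sum_le_of_forall_le _ _ fun _ hp =>
    (natDegree_C_mul_X_pow_le _ _).trans (Nat.le_sub_one_of_lt (Finset.mem_range.1 hp))

lemma chargePoly_reverse (W : List Dip) :
    chargePoly W.reverse = reflect (W.length - 1) (chargePoly W) := by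
  ext p
  rw [coeff_reflect, coeff_chargePoly, coeff_chargePoly]
  rcases lt_or_ge p W.length with hp | hp
  · rw [revAt_le (Nat.le_sub_one_of_lt hp), List.getD_reverse p hp]
  · rw [List.getD_eq_default _ _ (by simpa using hp), List.getD_eq_default]
    rcases hp.eq_or_lt with rfl | hp
    · cases W <;> simp [revAt_eq_self_of_lt]
    · rwa [revAt_eq_self_of_lt (by omega)]

lemma chargePoly_mul_reverse (V W : List Dip) :
    chargePoly V * chargePoly W.reverse =
      reflect (V.length - 1 + (W.length - 1)) (chargePoly V.reverse * chargePoly W) := by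
  rw [reflect_mul _ _ (by simpa using natDegree_chargePoly_le V.reverse)
    (natDegree_chargePoly_le W), ← chargePoly_reverse, ← V.length_reverse, ← chargePoly_reverse,
    List.reverse_reverse]

lemma force_take_sufx {V W : List Dip} (h : V.length = W.length) {i : ℕ} (hi : 1 ≤ i)
    (hiV : i ≤ V.length) :
    force (V.take i) (sufx W i) = -(chargePoly V * chargePoly W.reverse).coeff (i - 1) := by
  have hlen : (V.take i).length = i := by simpa using hiV
  rw [force_eq_neg_sum_charge (by rw [hlen, sufx, List.length_drop]; omega), hlen, coeff_mul,
    Finset.Nat.sum_antidiagonal_eq_sum_range_succ_mk, Nat.succ_eq_add_one, Nat.sub_add_cancel hi]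
  congr 1
  refine Finset.sum_congr rfl fun p hp => ?_
  rw [Finset.mem_range] at hp
  have htake : (V.take i).getD p blank = V.getD p blank := by
    simp [List.getD_eq_getElem?_getD, hp]
  have hsufx : (sufx W i).getD p blank = W.reverse.getD (i - 1 - p) blank := by
    rw [List.getD_reverse _ (by omega)]
    simp only [sufx, List.getD_eq_getElem?_getD, List.getElem?_drop]
    congr 2
    omega
  rw [coeff_chargePoly, coeff_chargePoly, htake, hsufx]

lemma force_eq_neg_coeff {V W : List Dip} (h : V.length = W.length) :
    force V W = -(chargePoly V * chargePoly W.reverse).coeff (V.length - 1) := by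
  rcases V.eq_nil_or_concat with rfl | ⟨V, x, rfl⟩
  · simp [force, chargePoly]
  · rw [← force_take_sufx h (by simp) le_rfl, List.take_length, h, sufx, Nat.sub_self,
      List.drop_zero]

lemma aligned_of_coeff_nonneg {V W : List Dip} (h : V.length = W.length)
    (hrev : ∀ m, 0 ≤ (chargePoly V * chargePoly W.reverse).coeff m)
    (hsame : ∀ m, m ≠ V.length - 1 → 0 ≤ (chargePoly V * chargePoly W).coeff m) :
    aligned V W := by
  refine ⟨by simpa [force_eq_neg_coeff h] using hrev _, fun A hA i hi hiV => ?_⟩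
  have hA_length : V.length = A.length := by
    rcases List.mem_pair.1 hA with rfl | rfl <;> simp [h]
  rw [force_comm (sufx V i), force_take_sufx hA_length hi (by omega),
    force_take_sufx hA_length.symm hi (by omega), neg_nonpos, neg_nonpos,
    chargePoly_mul_reverse A V, coeff_reflect, revAt_le (by omega), mul_comm (chargePoly A.reverse)]
  rcases List.mem_pair.1 hA with rfl | rfl
  · exact ⟨hrev _, hrev _⟩
  · rw [List.reverse_reverse]
    exact ⟨hsame _ (by omega), hsame _ (by omega)⟩

/-- The word of length `n` with letter `0` at the positions in `Z`, letter `1` at the remaining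
positions in `O`, and blanks elsewhere. -/
def patternWord (n : ℕ) (Z O : Finset ℕ) : List Dip :=
  (List.range n).map fun p => if p ∈ Z then zero else if p ∈ O then one else blank

@[simp]
lemma length_patternWord (n : ℕ) (Z O : Finset ℕ) : (patternWord n Z O).length = n := by
  simp [patternWord]

lemma chargePoly_patternWord {n : ℕ} {Z O : Finset ℕ} (hZ : Z ⊆ Finset.range n)
    (hO : O ⊆ Finset.range n) (hZO : Disjoint Z O) :
    chargePoly (patternWord n Z O) = ∑ p ∈ Z, X ^ p - ∑ p ∈ O, X ^ p := by
  ext p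
  simp only [coeff_chargePoly, coeff_sub, finsetSum_coeff, coeff_X_pow, Finset.sum_ite_eq]
  have hpZ : p ∈ Z → p < n := fun hp => Finset.mem_range.1 (hZ hp)
  have hpO : p ∈ O → p < n := fun hp => Finset.mem_range.1 (hO hp)
  have hpZO : p ∈ Z → p ∉ O := fun hp => Finset.disjoint_left.1 hZO hp
  rcases lt_or_ge p n with hp | hp
  · simp only [patternWord, List.getD_eq_getElem?_getD, List.getElem?_map,
      List.getElem?_range hp, Option.map_some, Option.getD_some]
    split_ifs <;> simp_all [charge]
  · rw [List.getD_eq_default _ _ (by simpa using hp), if_neg (by grind), if_neg (by grind)]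
    rfl

/-- The word of length `n` with `0 1 0` at positions `4, 5, 6`, a `0` at position `n - 6`, which
faces the `1` when the word is laid on its own reversal, and a domino `00` starting at each position
in `S`. -/
def dominoWord (n : ℕ) (S : Finset ℕ) : List Dip :=
  patternWord n ({4, 6, n - 6} ∪ (S ∪ S.image (· + 1))) {5}

@[simp]
lemma length_dominoWord (n : ℕ) (S : Finset ℕ) : (dominoWord n S).length = n :=
  length_patternWord _ _ _

/-- The sets of domino starts for which the dominoes of `dominoWord n S` fit into the word, overlap
neither each other nor the letters `0`, `1` outside the dominoes, and face none of these letters in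
the reversal of another such word. The starts `2, 7, 9, n - 2` are common to
all words. -/
structure IsDominoSet (n : ℕ) (S : Finset ℕ) : Prop where
  fourteen_le : 14 ≤ n
  base_subset : {2, 7, 9, n - 2} ⊆ S
  add_two_le : ∀ a ∈ S, a + 2 ≤ n
  succ_notMem : ∀ a ∈ S, a + 1 ∉ S
  notMem_Icc : ∀ a ∈ S, a ∉ Finset.Icc 3 6
  notMem_Icc_mirror : ∀ a ∈ S, a ∉ Finset.Icc (n - 8) (n - 5)

/-- The generating polynomial of the letters of `dominoWord n S` outside the dominoes. -/
noncomputable def corePoly (n : ℕ) : ℤ[X] :=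
  X ^ 4 - X ^ 5 + X ^ 6 + X ^ (n - 6)

lemma reflect_corePoly {n : ℕ} (hn : 7 ≤ n) :
    reflect (n - 1) (corePoly n) = X ^ (n - 5) - X ^ (n - 6) + X ^ (n - 7) + X ^ 5 := by
  obtain ⟨m, rfl⟩ := Nat.exists_eq_add_of_le' hn
  simp only [corePoly, reflect_add, reflect_sub, reflect_monomial]
  rw [revAt_le (by omega), revAt_le (by omega), revAt_le (by omega), revAt_le (by omega)]
  congr! 2
  omega

/-- The generating polynomial of the domino starts. Its coefficients are natural numbers, so that
nonnegativity in `ℤ[X]` can be certified by exhibiting a preimage in `ℕ[X]`. -/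
noncomputable def startPoly (S : Finset ℕ) : ℕ[X] :=
  ∑ a ∈ S, X ^ a

lemma coeff_nonneg_of_mem_lifts {p : ℤ[X]} (hp : p ∈ lifts (Nat.castRingHom ℤ)) (m : ℕ) :
    0 ≤ p.coeff m := by
  obtain ⟨q, rfl⟩ := (mem_lifts p).1 hp
  simp

lemma coeff_startPoly_eq_zero_iff {S : Finset ℕ} {r : ℕ} : (startPoly S).coeff r = 0 ↔ r ∉ S := by
  simp [startPoly, finsetSum_coeff, coeff_X_pow]

lemma coeff_startPoly_mul_startPoly_eq_zero_iff {S T : Finset ℕ} {r : ℕ} :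
    (startPoly S * startPoly T).coeff r = 0 ↔ ∀ a ∈ S, ∀ b ∈ T, a + b ≠ r := by
  simp [startPoly, Finset.sum_mul_sum, ← pow_add, finsetSum_coeff, coeff_X_pow, eq_comm (a := r)]

namespace IsDominoSet

variable {n : ℕ} {S T : Finset ℕ}

lemma exists_startPoly_eq (hS : IsDominoSet n S) :
    ∃ s : ℕ[X], startPoly S = X ^ 2 + X ^ 7 + X ^ 9 + X ^ (n - 2) + s := by
  have := hS.fourteen_le
  refine ⟨startPoly (S \ {2, 7, 9, n - 2}), ?_⟩
  rw [startPoly, startPoly, ← Finset.sum_sdiff hS.base_subset, add_comm]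
  congr 1
  rw [Finset.sum_insert, Finset.sum_insert, Finset.sum_insert, Finset.sum_singleton]
  · ring
  all_goals
    simp only [Finset.mem_insert, Finset.mem_singleton]
    omega

lemma chargePoly_dominoWord (hS : IsDominoSet n S) :
    chargePoly (dominoWord n S) = corePoly n + (1 + X) * (startPoly S).map (Nat.castRingHom ℤ) := by
  have hn := hS.fourteen_le
  have hlt := hS.add_two_le
  have havoid : ∀ a ∈ S, (a < 3 ∨ 6 < a) ∧ (a < n - 8 ∨ n - 5 < a) := fun a ha => by
    have h := hS.notMem_Icc a ha
    have h' := hS.notMem_Icc_mirror a ha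
    simp only [Finset.mem_Icc] at h h'
    omega
  have hdominoes : Disjoint S (S.image (· + 1)) := by
    simp only [Finset.disjoint_right, Finset.forall_mem_image]
    exact hS.succ_notMem
  have hcore : Disjoint {4, 6, n - 6} (S ∪ S.image (· + 1)) := by
    simp only [Finset.disjoint_right, Finset.mem_union, Finset.mem_image, Finset.mem_insert,
      Finset.mem_singleton]
    grind
  rw [dominoWord, chargePoly_patternWord, Finset.sum_union hcore, Finset.sum_union hdominoes,
    Finset.sum_image (by simp), Finset.sum_insert, Finset.sum_insert, Finset.sum_singleton,
    Finset.sum_singleton, corePoly, startPoly, Polynomial.map_sum]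
  · simp only [pow_succ, ← Finset.sum_mul, Polynomial.map_pow, map_X]
    ring
  · simp only [Finset.mem_singleton]
    omega
  · simp only [Finset.mem_insert, Finset.mem_singleton]
    omega
  · intro p
    simp only [Finset.mem_union, Finset.mem_image, Finset.mem_insert, Finset.mem_singleton,
      Finset.mem_range]
    grind
  · simpa using by omega
  · simp only [Finset.disjoint_singleton_right, Finset.mem_union, Finset.mem_image,
      Finset.mem_insert, Finset.mem_singleton]
    grind

lemma chargePoly_dominoWord_reverse (hS : IsDominoSet n S) :
    chargePoly (dominoWord n S).reverse =
      reflect (n - 1) (corePoly n) +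
        (1 + X) * (reflect (n - 2) (startPoly S)).map (Nat.castRingHom ℤ) := by
  have hn := hS.fourteen_le
  have hdeg : ((startPoly S).map (Nat.castRingHom ℤ)).natDegree ≤ n - 2 :=
    natDegree_map_le.trans <| natDegree_sum_le_of_forall_le _ _ fun a ha =>
      (natDegree_X_pow_le a).trans (Nat.le_sub_of_add_le (hS.add_two_le a ha))
  have hdominoes : reflect (n - 1) ((1 + X) * (startPoly S).map (Nat.castRingHom ℤ)) =
      (1 + X) * (reflect (n - 2) (startPoly S)).map (Nat.castRingHom ℤ) := by
    rw [show n - 1 = 1 + (n - 2) by omega, reflect_mul _ _ (by compute_degree) hdeg, reflect_add,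
      reflect_one, reflect_one_X, pow_one, add_comm X, reflect_map]
  rw [chargePoly_reverse, length_dominoWord, hS.chargePoly_dominoWord, reflect_add, hdominoes]

lemma chargePoly_mul_reverse_mem_lifts (hS : IsDominoSet n S) (hT : IsDominoSet n T) :
    chargePoly (dominoWord n S) * chargePoly (dominoWord n T).reverse ∈
      lifts (Nat.castRingHom ℤ) := by
  have hn := hS.fourteen_le
  obtain ⟨s, hs⟩ := hS.exists_startPoly_eq
  obtain ⟨t, ht⟩ := hT.exists_startPoly_eq
  obtain ⟨t', ht'⟩ : ∃ t' : ℕ[X], reflect (n - 2) (startPoly T) =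
      X ^ (n - 4) + X ^ (n - 9) + X ^ (n - 11) + 1 + t' := by
    refine ⟨reflect (n - 2) t, ?_⟩
    simp only [ht, reflect_add, reflect_monomial]
    rw [revAt_le (by omega), revAt_le (by omega), revAt_le (by omega), revAt_le le_rfl,
      Nat.sub_self, pow_zero, Nat.sub_sub, Nat.sub_sub, Nat.sub_sub]
  rw [hS.chargePoly_dominoWord, hT.chargePoly_dominoWord_reverse, reflect_corePoly (by omega), hs,
    ht', corePoly]
  obtain ⟨m, rfl⟩ := Nat.exists_eq_add_of_le' (show 11 ≤ n by omega)
  simp only [Nat.add_sub_cancel, Nat.reduceSubDiff]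
  -- With `n = m + 11`, the negative terms of the expanded product are `-X ^ 10`, `-X ^ (2 m + 10)`,
  -- `-2 X ^ (m + 9)` and `-2 X ^ (m + 11)`. The terms `2 X ^ 10` and `2 X ^ (2 m + 10)` of
  -- `(1 + X) ^ 2 X ^ 9` and `(1 + X) ^ 2 X ^ (2 m + 9)` absorb the first two; the other two cancel
  -- against `X ^ 7 X ^ (m + 2)`, `X ^ (m + 7) X ^ 2`, `X ^ 4 X ^ (m + 7)` and `X ^ (m + 4) X ^ 7`,
  -- which come from the dominoes at `2` and `7`.
  refine (mem_lifts _).2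
    ⟨X ^ (m + 8) * (1 + 4 * X ^ 2 + X ^ 4) + (X ^ 9 + X ^ (2 * m + 9)) * (2 + X + 2 * X ^ 2)
      + (X ^ 4 + X ^ 7 + X ^ (m + 5) + X ^ (m + 6)) * (X ^ m + 1 + t')
      + X ^ (m + 6) + X ^ (m + 14) + (X ^ (m + 5) + X ^ (m + 6)) * (X ^ (m + 2) + X ^ (m + 7))
      + (X ^ 5 + X ^ 6 + X ^ (m + 4) + X ^ (m + 7)) * (X ^ 9 + X ^ (m + 9) + s)
      + X ^ (m + 6) + X ^ (m + 14) + (X ^ 5 + X ^ 6) * (X ^ 2 + X ^ 7)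
      + (1 + X) ^ 2 * ((X ^ 2 + X ^ 7 + s) * (X ^ (m + 7) + X ^ (m + 2) + X ^ m + 1 + t')
        + X ^ 9 * (X ^ (m + 7) + X ^ (m + 2) + X ^ m + t')
        + X ^ (m + 9) * (X ^ (m + 7) + X ^ (m + 2) + 1 + t')), ?_⟩
  simp only [Polynomial.map_add, Polynomial.map_mul, Polynomial.map_pow, Polynomial.map_one,
    Polynomial.map_ofNat, map_X]
  ring

lemma chargePoly_mul (hS : IsDominoSet n S) (hT : IsDominoSet n T) :
    chargePoly (dominoWord n S) * chargePoly (dominoWord n T) + 2 * X ^ (n - 1) =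
      (X ^ 8 + 3 * X ^ 10 + X ^ 12 + 2 * X ^ (n - 2) + 2 * X ^ n + X ^ (2 * n - 12) - 2 * X ^ 9 -
        2 * X ^ 11) +
      ((X ^ 4 + X ^ 7 + X ^ (n - 6) + X ^ (n - 5)) * (startPoly S + startPoly T) +
        (1 + X) ^ 2 * (startPoly S * startPoly T)).map (Nat.castRingHom ℤ) := by
  obtain ⟨m, rfl⟩ := Nat.exists_eq_add_of_le' (hS.fourteen_le.trans' (by norm_num : 6 ≤ 14))
  rw [hS.chargePoly_dominoWord, hT.chargePoly_dominoWord, corePoly,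
    show 2 * (m + 6) - 12 = 2 * m by omega]
  simp only [Polynomial.map_add, Polynomial.map_mul, Polynomial.map_pow, Polynomial.map_one,
    map_X, Nat.add_sub_cancel, Nat.reduceSubDiff]
  ring

lemma chargePoly_mul_add_mem_lifts (hS : IsDominoSet n S) (hT : IsDominoSet n T) :
    chargePoly (dominoWord n S) * chargePoly (dominoWord n T) + 2 * X ^ (n - 1) ∈
      lifts (Nat.castRingHom ℤ) := by
  obtain ⟨s, hs⟩ := hS.exists_startPoly_eq
  obtain ⟨t, ht⟩ := hT.exists_startPoly_eq
  rw [hS.chargePoly_mul hT, Polynomial.map_add, ← add_assoc]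
  refine add_mem ((mem_lifts _).2 ?_) ((mem_lifts _).2 ⟨_, rfl⟩)
  -- `X ^ 7 X ^ 2` and `X ^ 4 X ^ 7`, once for each word, cancel `-2 X ^ 9` and `-2 X ^ 11`.
  refine ⟨X ^ 8 + 3 * X ^ 10 + X ^ 12 + 2 * X ^ (n - 2) + 2 * X ^ n + X ^ (2 * n - 12)
      + 2 * X ^ 6 + 2 * X ^ 14 + 2 * (X ^ (n - 6) + X ^ (n - 5)) * (X ^ 2 + X ^ 7)
      + (X ^ 4 + X ^ 7 + X ^ (n - 6) + X ^ (n - 5))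
        * (2 * X ^ 9 + 2 * X ^ (n - 2) + s + t), ?_⟩
  rw [hs, ht]
  simp only [Polynomial.map_add, Polynomial.map_mul, Polynomial.map_pow, Polynomial.map_ofNat,
    map_X]
  ring

lemma force_reverse (hS : IsDominoSet n S) (hT : IsDominoSet n T) :
    force (dominoWord n S) (dominoWord n T).reverse =
      2 - ((1 + X) ^ 2 * (startPoly S * startPoly T)).coeff (n - 1) := by
  have hn := hS.fourteen_le
  have hcross {U : Finset ℕ} (hU : IsDominoSet n U) :
      ((X ^ 4 + X ^ 7 + X ^ (n - 6) + X ^ (n - 5)) * startPoly U).coeff (n - 1) = 0 := by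
    simp only [add_mul, coeff_add, coeff_X_pow_mul', Nat.add_eq_zero_iff, ite_eq_right_iff,
      coeff_startPoly_eq_zero_iff]
    refine ⟨⟨⟨fun _ h => ?_, fun _ h => ?_⟩, fun _ h => ?_⟩, fun _ h => ?_⟩
    all_goals
      have hlow := hU.notMem_Icc _ h
      have hhigh := hU.notMem_Icc_mirror _ h
      simp only [Finset.mem_Icc] at hlow hhigh
      omega
  have hcore : (X ^ 8 + 3 * X ^ 10 + X ^ 12 + 2 * X ^ (n - 2) + 2 * X ^ n + X ^ (2 * n - 12) -
      2 * X ^ 9 - 2 * X ^ 11 : ℤ[X]).coeff (n - 1) = 0 := by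
    simp only [coeff_sub, coeff_add, coeff_ofNat_mul, coeff_X_pow]
    repeat rw [if_neg (by omega)]
    norm_num
  rw [force_eq_neg_coeff (by simp), length_dominoWord, List.reverse_reverse,
    eq_sub_of_add_eq (hS.chargePoly_mul hT), coeff_sub, coeff_add, hcore, coeff_map, coeff_add,
    mul_add, coeff_add, hcross hS, hcross hT, coeff_ofNat_mul, coeff_X_pow_self]
  simp

lemma aligned (hS : IsDominoSet n S) (hT : IsDominoSet n T) :
    aligned (dominoWord n S) (dominoWord n T) := by
  refine aligned_of_coeff_nonneg (by simp)
    (coeff_nonneg_of_mem_lifts (hS.chargePoly_mul_reverse_mem_lifts hT)) fun m hm => ?_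
  rw [length_dominoWord] at hm
  simpa only [coeff_add, coeff_ofNat_mul, coeff_X_pow, if_neg hm, mul_zero, add_zero] using
    coeff_nonneg_of_mem_lifts (hS.chargePoly_mul_add_mem_lifts hT) m

lemma force_reverse_pos_iff (hS : IsDominoSet n S) (hT : IsDominoSet n T)
    (hodd : ∀ a ∈ S, ∀ b ∈ T, a + b ≠ n - 3 ∧ a + b ≠ n - 1) :
    0 < force (dominoWord n S) (dominoWord n T).reverse ↔ ∀ a ∈ S, ∀ b ∈ T, a + b ≠ n - 2 := by
  obtain ⟨m, rfl⟩ := Nat.exists_eq_add_of_le' (hS.fourteen_le.trans' (by norm_num : 3 ≤ 14))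
  have h₁ : (startPoly S * startPoly T).coeff (m + 2) = 0 :=
    coeff_startPoly_mul_startPoly_eq_zero_iff.2 fun a ha b hb => (hodd a ha b hb).2
  have h₃ : (startPoly S * startPoly T).coeff m = 0 :=
    coeff_startPoly_mul_startPoly_eq_zero_iff.2 fun a ha b hb => (hodd a ha b hb).1
  have hcoeff : ((1 + X) ^ 2 * (startPoly S * startPoly T)).coeff (m + 2) =
      2 * (startPoly S * startPoly T).coeff (m + 1) := by
    rw [show (1 + X : ℕ[X]) ^ 2 = 1 + 2 * X + X ^ 2 by ring]
    simp only [add_mul, one_mul, mul_assoc, coeff_add, coeff_ofNat_mul, coeff_X_mul,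
      coeff_X_pow_mul, h₁, h₃]
    ring
  rw [hS.force_reverse hT, ← coeff_startPoly_mul_startPoly_eq_zero_iff, Nat.add_sub_assoc (by simp),
    Nat.add_sub_assoc (by simp), hcoeff]
  simp only [Nat.reduceSub]
  omega

end IsDominoSet

/-- The domino starts of the word with index `i` that is to repel the reversals of the words with
index in `R`. -/
def glueStarts (n i : ℕ) (R : Finset ℕ) : Finset ℕ :=
  {2, 7, 9, n - 2, 9 + 2 * i} ∪ R.image (n - 11 - 2 * ·)

section glueStarts

variable {k n i j a b : ℕ} {R R' : Finset ℕ}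

lemma mem_glueStarts (hR : R ⊆ Finset.Icc 1 k) :
    a ∈ glueStarts n i R ↔ a = 2 ∨ a = 7 ∨ a = 9 ∨ a = n - 2 ∨ a = 9 + 2 * i ∨
      ∃ l ∈ R, l ∈ Finset.Icc 1 k ∧ n - 11 - 2 * l = a := by
  have hmem : (∃ l ∈ R, l ∈ Finset.Icc 1 k ∧ n - 11 - 2 * l = a) ↔
      ∃ l ∈ R, n - 11 - 2 * l = a := by
    simp only [← and_assoc, and_iff_left_of_imp (@hR _)]
  rw [hmem]
  simp [glueStarts]

lemma isDominoSet_glueStarts (hn : 4 * k + 22 ≤ n) (hi : i ∈ Finset.Icc 1 k)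
    (hR : R ⊆ Finset.Icc 1 k) : IsDominoSet n (glueStarts n i R) where
  fourteen_le := by omega
  base_subset := by
    simp [Finset.insert_subset_iff, glueStarts]
  add_two_le a ha := by
    have hi' := Finset.mem_Icc.1 hi
    simp only [mem_glueStarts hR, Finset.mem_Icc] at ha
    rcases ha with ha | ha | ha | ha | ha | ⟨l, -, hl, ha⟩ <;> omega
  succ_notMem a ha hb := by
    have hi' := Finset.mem_Icc.1 hi
    simp only [mem_glueStarts hR, Finset.mem_Icc] at ha hb
    rcases ha with ha | ha | ha | ha | ha | ⟨l, -, hl, ha⟩ <;>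
      rcases hb with hb | hb | hb | hb | hb | ⟨l', -, hl', hb⟩ <;> omega
  notMem_Icc a ha := by
    simp only [mem_glueStarts hR, Finset.mem_Icc] at ha ⊢
    rcases ha with ha | ha | ha | ha | ha | ⟨l, -, hl, ha⟩ <;> omega
  notMem_Icc_mirror a ha := by
    have hi' := Finset.mem_Icc.1 hi
    simp only [mem_glueStarts hR, Finset.mem_Icc] at ha ⊢
    rcases ha with ha | ha | ha | ha | ha | ⟨l, -, hl, ha⟩ <;> omega

lemma add_ne_of_mem_glueStarts (hn : 4 * k + 22 ≤ n) (hi : i ≤ k) (hj : j ≤ k)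
    (hR : R ⊆ Finset.Icc 1 k) (hR' : R' ⊆ Finset.Icc 1 k) (ha : a ∈ glueStarts n i R)
    (hb : b ∈ glueStarts n j R') : a + b ≠ n - 3 ∧ a + b ≠ n - 1 := by
  simp only [mem_glueStarts hR, mem_glueStarts hR', Finset.mem_Icc] at ha hb
  rcases ha with ha | ha | ha | ha | ha | ⟨l, -, hl, ha⟩ <;>
    rcases hb with hb | hb | hb | hb | hb | ⟨l', -, hl', hb⟩ <;> omega

lemma forall_add_ne_glueStarts_iff (hn : 4 * k + 22 ≤ n) (hi : i ∈ Finset.Icc 1 k)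
    (hj : j ∈ Finset.Icc 1 k) (hR : R ⊆ Finset.Icc 1 k) (hR' : R' ⊆ Finset.Icc 1 k) :
    (∀ a ∈ glueStarts n i R, ∀ b ∈ glueStarts n j R', a + b ≠ n - 2) ↔ i ∉ R' ∧ j ∉ R := by
  have hi' := Finset.mem_Icc.1 hi
  have hj' := Finset.mem_Icc.1 hj
  simp only [mem_glueStarts hR, mem_glueStarts hR']
  refine ⟨fun h => ⟨fun hiR => ?_, fun hjR => ?_⟩, fun ⟨hiR, hjR⟩ a ha b hb => ?_⟩
  · exact h (9 + 2 * i) (by simp) (n - 11 - 2 * i) (by simp; grind) (by omega)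
  · exact h (n - 11 - 2 * j) (by simp; grind) (9 + 2 * j) (by simp) (by omega)
  · simp only [Finset.mem_Icc] at ha hb
    rcases ha with ha | ha | ha | ha | ha | ⟨l, hlR, hl, ha⟩ <;>
      rcases hb with hb | hb | hb | hb | hb | ⟨l', hlR', hl', hb⟩ <;> try omega
    · have : i ≠ l' := fun h => hiR (h ▸ hlR')
      omega
    · have : j ≠ l := fun h => hjR (h ▸ hlR)
      omega

end glueStarts

theorem stmt3_general {k n : ℕ} (hn : 4 * k + 22 ≤ n) (g : ℕ → ℕ → ℤ)
    (hsym : ∀ i ∈ Finset.Icc 1 k, ∀ j ∈ Finset.Icc 1 k, g i j = g j i) :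
    ∃ W : ℕ → List Dip, (∀ i ∈ Finset.Icc 1 k, (W i).length = n) ∧ attEncodes k W g := by
  let R (i : ℕ) : Finset ℕ := {l ∈ Finset.Icc 1 k | g i l ≤ 0}
  have hR (i : ℕ) : R i ⊆ Finset.Icc 1 k := Finset.filter_subset _ _
  have hS : ∀ i ∈ Finset.Icc 1 k, IsDominoSet n (glueStarts n i (R i)) := fun i hi =>
    isDominoSet_glueStarts hn hi (hR i)
  refine ⟨fun i => dominoWord n (glueStarts n i (R i)), fun i _ => length_dominoWord _ _,
    fun i hi j hj => (hS i hi).aligned (hS j hj), fun i hi j hj => ?_⟩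
  have hodd : ∀ a ∈ glueStarts n i (R i), ∀ b ∈ glueStarts n j (R j),
      a + b ≠ n - 3 ∧ a + b ≠ n - 1 := fun _ ha _ hb =>
    add_ne_of_mem_glueStarts hn (Finset.mem_Icc.1 hi).2 (Finset.mem_Icc.1 hj).2 (hR i) (hR j) ha hb
  rw [(hS i hi).force_reverse_pos_iff (hS j hj) hodd,
    forall_add_ne_glueStarts_iff hn hi hj (hR i) (hR j)]
  simp [R, hi, hj, hsym j hj i hi]

/-- For every `k`-glue function `g`, there is a set of `k` dipole words, each of length
`9k+42`, that attractively encodes `g`. -/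
theorem stmt3 (k : ℕ) (hk : 0 < k) (g : ℕ → ℕ → ℤ)
    (hsym : ∀ i ∈ Finset.Icc 1 k, ∀ j ∈ Finset.Icc 1 k, g i j = g j i) :
    ∃ W : ℕ → List Dip,
      (∀ i ∈ Finset.Icc 1 k, (W i).length = 9 * k + 42) ∧
      attEncodes k W g := by
  exact stmt3_general (by omega) g hsym
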